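/- arXiv:1108.2611 — 4 statements merged into one kernel-verified Lean document; each statement's English description precedes it below -/
import Mathlib

section
/- Fix h > 0 and τ > 0, and let Q(ω, h; τ) = (1/τ)√(2/(πτ)) (2h(1+τ) − ω) exp(−2h² − (ω − 2h)²/(2τ)) for ω < h(1+τ). Then ∫_{−∞}^{h(1+τ)} Q(ω, h; τ) dω = √(2/(πτ)) exp(−h²(1+τ)²/(2τ)) + 2h e^{−2h²} erfc( h(1−τ)/√(2τ) ), where erfc(x) = (2/√π) ∫_x^∞ e^{−u²} du. -/
open Real MeasureTheory Set

noncomputable def erfc (x : ℝ) : ℝ := (2 / Real.sqrt π) * ∫ u in Ioi x, Real.exp (-u ^ 2)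

/-!
Reflecting `ω` in the centre `2h` of the Gaussian turns the left tail into a right tail and the
linear factor into an affine one. Its linear part is an exact derivative and contributes the
boundary term; its constant part `2hτ` contributes the error function. The exponent of the
boundary term is a perfect square because `4τ + (1 - τ)² = (1 + τ)²`.
-/

open Filter Topology

theorem integral_Ioi_exp_neg_mul_sq_eq_erfc {b : ℝ} (hb : 0 < b) (a : ℝ) :
    ∫ x in Ioi a, exp (-b * x ^ 2) = √(π / b) / 2 * erfc (√b * a) := by
  have exponent_eq (x : ℝ) : -b * x ^ 2 = -(√b * x) ^ 2 := by
    rw [mul_pow, sq_sqrt hb.le, neg_mul]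
  simp only [exponent_eq]
  rw [integral_comp_mul_left_Ioi (fun u ↦ exp (-u ^ 2)) a (sqrt_pos.mpr hb), erfc,
    sqrt_div pi_pos.le, smul_eq_mul]
  field_simp

theorem integral_Ioi_mul_exp_neg_mul_sq {b : ℝ} (hb : 0 < b) (a : ℝ) :
    ∫ x in Ioi a, x * exp (-b * x ^ 2) = exp (-b * a ^ 2) / (2 * b) := by
  have hasDerivAt_primitive (x : ℝ) :
      HasDerivAt (fun x ↦ -exp (-b * x ^ 2) / (2 * b)) (x * exp (-b * x ^ 2)) x := by
    refine ((hasDerivAt_pow 2 x).const_mul (-b)).exp.neg.div_const (2 * b) |>.congr_deriv ?_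
    simp only [Nat.cast_ofNat, Nat.add_one_sub_one, pow_one]
    field_simp
  have tendsto_primitive : Tendsto (fun x ↦ -exp (-b * x ^ 2) / (2 * b)) atTop (𝓝 0) := by
    have tendsto_exponent : Tendsto (fun x : ℝ ↦ -b * x ^ 2) atTop atBot :=
      (tendsto_pow_atTop two_ne_zero).const_mul_atTop_of_neg (neg_neg_of_pos hb)
    simpa using (tendsto_exp_atBot.comp tendsto_exponent).neg.div_const (2 * b)
  rw [integral_Ioi_of_hasDerivAt_of_tendsto' (fun x _ ↦ hasDerivAt_primitive x)
    (integrable_mul_exp_neg_mul_sq hb).integrableOn tendsto_primitive]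
  ring

theorem integral_Ioi_comp_sub_left {E : Type*} [NormedAddCommGroup E] [NormedSpace ℝ E]
    (f : ℝ → E) (c m : ℝ) : ∫ x in Ioi (m - c), f (m - x) = ∫ x in Iio c, f x := by
  simpa only [preimage_const_sub_Iio] using
    (Measure.measurePreserving_sub_left volume m).setIntegral_preimage_emb
      (MeasurableEquiv.subLeft m).measurableEmbedding f (Iio c)

theorem integral_Iio_sub_mul_exp_neg_sq_div {v : ℝ} (hv : 0 < v) (a c m : ℝ) :
    ∫ x in Iio c, (a - x) * exp (-(x - m) ^ 2 / (2 * v)) =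
      v * exp (-(c - m) ^ 2 / (2 * v)) +
        (a - m) * √(π * v / 2) * erfc ((m - c) / √(2 * v)) := by
  set b := (2 * v)⁻¹ with b_def
  have hb : 0 < b := by positivity
  have reflect (x : ℝ) : (a - (m - x)) * exp (-(m - x - m) ^ 2 / (2 * v)) =
      (a - m) * exp (-b * x ^ 2) + x * exp (-b * x ^ 2) := by
    rw [show -(m - x - m) ^ 2 / (2 * v) = -b * x ^ 2 by rw [b_def]; ring]
    ring
  have half_gaussian_mass : √(π / b) / 2 = √(π * v / 2) := by
    rw [show π / b = 2 ^ 2 * (π * v / 2) by rw [b_def]; field_simp,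
      sqrt_mul (by positivity), sqrt_sq zero_le_two]
    ring
  calc ∫ x in Iio c, (a - x) * exp (-(x - m) ^ 2 / (2 * v))
    _ = ∫ x in Ioi (m - c), ((a - m) * exp (-b * x ^ 2) + x * exp (-b * x ^ 2)) := by
      rw [← integral_Ioi_comp_sub_left _ c m]
      simp only [reflect]
    _ = (a - m) * (√(π / b) / 2 * erfc (√b * (m - c))) +
        exp (-b * (m - c) ^ 2) / (2 * b) := by
      rw [integral_add ((integrable_exp_neg_mul_sq hb).integrableOn.const_mul _)
          (integrable_mul_exp_neg_mul_sq hb).integrableOn, integral_const_mul,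
        integral_Ioi_exp_neg_mul_sq_eq_erfc hb, integral_Ioi_mul_exp_neg_mul_sq hb]
    _ = _ := by
      rw [half_gaussian_mass,
        show √b * (m - c) = (m - c) / √(2 * v) by rw [b_def, sqrt_inv]; ring,
        show -b * (m - c) ^ 2 = -(c - m) ^ 2 / (2 * v) by rw [b_def]; ring, b_def]
      field_simp
      ring

theorem stmt_6_general (h τ : ℝ) (hτ : 0 < τ) :
    (∫ ω in Iio (h * (1 + τ)),
        (1 / τ) * √(2 / (π * τ)) * (2 * h * (1 + τ) - ω) *
          exp (-2 * h ^ 2 - (ω - 2 * h) ^ 2 / (2 * τ))) =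
      √(2 / (π * τ)) * exp (-h ^ 2 * (1 + τ) ^ 2 / (2 * τ)) +
        2 * h * exp (-2 * h ^ 2) * erfc (h * (1 - τ) / √(2 * τ)) := by
  have factor (ω : ℝ) : (1 / τ) * √(2 / (π * τ)) * (2 * h * (1 + τ) - ω) *
        exp (-2 * h ^ 2 - (ω - 2 * h) ^ 2 / (2 * τ)) =
      (1 / τ) * √(2 / (π * τ)) * exp (-2 * h ^ 2) *
        ((2 * h * (1 + τ) - ω) * exp (-(ω - 2 * h) ^ 2 / (2 * τ))) := by
    rw [sub_eq_add_neg (-2 * h ^ 2), exp_add, neg_div]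
    ring
  have boundary_exponent : exp (-h ^ 2 * (1 + τ) ^ 2 / (2 * τ)) =
      exp (-2 * h ^ 2) * exp (-(h * (1 + τ) - 2 * h) ^ 2 / (2 * τ)) := by
    rw [← exp_add]
    congr 1
    field_simp
    ring
  have sqrt_cancel : √(2 / (π * τ)) * √(π * τ / 2) = 1 := by
    rw [← sqrt_mul (by positivity), div_mul_div_cancel₀ (by positivity), div_self two_ne_zero,
      sqrt_one]
  simp only [factor]
  rw [integral_const_mul, integral_Iio_sub_mul_exp_neg_sq_div hτ, boundary_exponent,
    show 2 * h - h * (1 + τ) = h * (1 - τ) by ring]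
  calc
    _ = (1 / τ * τ) * (√(2 / (π * τ)) *
          (exp (-2 * h ^ 2) * exp (-(h * (1 + τ) - 2 * h) ^ 2 / (2 * τ)))) +
        (1 / τ * τ) * (√(2 / (π * τ)) * √(π * τ / 2)) *
          (2 * h * exp (-2 * h ^ 2) * erfc (h * (1 - τ) / √(2 * τ))) := by ring
    _ = _ := by rw [one_div_mul_cancel hτ.ne', sqrt_cancel, one_mul, one_mul, one_mul]

theorem stmt_6 (h τ : ℝ) (hh : 0 < h) (hτ : 0 < τ) :
    (∫ ω in Iio (h * (1 + τ)),
        (1 / τ) * Real.sqrt (2 / (π * τ)) * (2 * h * (1 + τ) - ω) *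
          Real.exp (-2 * h ^ 2 - (ω - 2 * h) ^ 2 / (2 * τ))) =
      Real.sqrt (2 / (π * τ)) * Real.exp (-h ^ 2 * (1 + τ) ^ 2 / (2 * τ)) +
        2 * h * Real.exp (-2 * h ^ 2) * erfc (h * (1 - τ) / Real.sqrt (2 * τ)) :=
  stmt_6_general h τ hτ
end

section
/- Fix h > 0 and τ > 0, and let Q(ω, h; τ) = (1/τ)√(2/(πτ)) (2h(1+τ) − ω) exp(−2h² − (ω−2h)²/(2τ)) and P(ω, h, τ) = 1 − e^{−2h(h(1+τ) − ω)}. Then ∫_{−∞}^{h(1+τ)} Q(ω, h; τ) P(ω, h, τ) dω = 2h e^{−2h²} erfc( h(1−τ)/√(2τ) ), where erfc(x) = (2/√π) ∫_x^∞ e^{−u²} du. -/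
open Real MeasureTheory Set

/-!
Up to constants, `Q` is `2 h (1 + τ) - ω` times the Gaussian density with mean `2 h` and variance
`τ`, and multiplying this density by the exponential `1 - P` gives a multiple of the density with
mean `2 h (1 + τ)`. Splitting `2 h (1 + τ) - ω = (2 h - ω) + 2 h τ` in the first density, the
integrand becomes `2 h τ` times that density plus `τ` times the derivative of the difference
between the first density and the tilted one. This difference vanishes at `-∞`, and also at
`ω = h (1 + τ)` because `P = 0` there, so only a Gaussian distribution function remains.
-/

open ProbabilityTheory
open scoped NNReal

section GaussianDensity

variable (μ k b x : ℝ) (v : ℝ≥0)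

lemma hasDerivAt_gaussianPDFReal :
    HasDerivAt (gaussianPDFReal μ v) ((μ - x) / v * gaussianPDFReal μ v x) x := by
  have exponent_deriv : HasDerivAt (fun y : ℝ ↦ -(y - μ) ^ 2 / (2 * v)) ((μ - x) / v) x :=
    ((((hasDerivAt_id' x).sub_const μ).pow 2).neg.div_const (2 * (v : ℝ))).congr_deriv (by ring)
  exact (exponent_deriv.exp.const_mul _).congr_deriv (by rw [gaussianPDFReal]; ring)

lemma integrable_mean_sub_mul_gaussianPDFReal :
    Integrable (fun x ↦ (μ - x) * gaussianPDFReal μ v x) := by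
  rcases eq_or_ne v 0 with rfl | hv
  · simp
  have hb : 0 < (2 * (v : ℝ))⁻¹ := by positivity
  refine (((integrable_mul_exp_neg_mul_sq hb).comp_sub_right μ).const_mul
    (-(√(2 * π * v))⁻¹)).congr (.of_forall fun x ↦ ?_)
  simp only [gaussianPDFReal]
  ring_nf

lemma setIntegral_Iio_mean_sub_mul_gaussianPDFReal :
    ∫ x in Iio b, (μ - x) * gaussianPDFReal μ v x = v * gaussianPDFReal μ v b := by
  rcases eq_or_ne v 0 with rfl | hv
  · simp
  have hderiv (x : ℝ) : HasDerivAt (fun y ↦ v * gaussianPDFReal μ v y)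
      ((μ - x) * gaussianPDFReal μ v x) x :=
    ((hasDerivAt_gaussianPDFReal μ x v).const_mul (v : ℝ)).congr_deriv (by field)
  have hint := (integrable_mean_sub_mul_gaussianPDFReal μ v).integrableOn (s := Iic b)
  have hlim : Filter.Tendsto (fun y ↦ v * gaussianPDFReal μ v y) .atBot (nhds 0) :=
    tendsto_zero_of_hasDerivAt_of_integrableOn_Iic (fun x _ ↦ hderiv x) hint
      ((integrable_gaussianPDFReal μ v).const_mul _).integrableOn
  rw [← integral_Iic_eq_integral_Iio,
    integral_Iic_of_hasDerivAt_of_tendsto' (fun x _ ↦ hderiv x) hint hlim, sub_zero]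

lemma gaussianPDFReal_mul_exp :
    gaussianPDFReal μ v x * exp (k * x) =
      exp (k * μ + k ^ 2 * v / 2) * gaussianPDFReal (μ + k * v) v x := by
  rcases eq_or_ne v 0 with rfl | hv
  · simp
  have exponents_eq : -(x - μ) ^ 2 / (2 * v) + k * x =
      k * μ + k ^ 2 * v / 2 + -(x - (μ + k * v)) ^ 2 / (2 * v) := by field
  simp only [gaussianPDFReal]
  rw [mul_assoc, ← exp_add, exponents_eq, exp_add]
  ring

lemma setIntegral_Iio_gaussianPDFReal_mul_one_sub_exp :
    ∫ x in Iio b, (μ + k * v - x) * gaussianPDFReal μ v x * (1 - exp (-k * (b - x))) =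
      k * v * ∫ x in Iio b, gaussianPDFReal μ v x := by
  set ν := μ + k * v
  obtain ⟨C, tilt⟩ : ∃ C, ∀ x,
      gaussianPDFReal μ v x * exp (-k * (b - x)) = C * gaussianPDFReal ν v x := by
    refine ⟨exp (-k * b) * exp (k * μ + k ^ 2 * v / 2), fun x ↦ ?_⟩
    rw [mul_assoc, ← gaussianPDFReal_mul_exp, show -k * (b - x) = -k * b + k * x by ring, exp_add]
    ring
  have boundary_eq : gaussianPDFReal μ v b = C * gaussianPDFReal ν v b := by
    simpa using tilt b
  have split (x : ℝ) : (ν - x) * gaussianPDFReal μ v x * (1 - exp (-k * (b - x))) =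
      (μ - x) * gaussianPDFReal μ v x + k * v * gaussianPDFReal μ v x -
        C * ((ν - x) * gaussianPDFReal ν v x) := by
    linear_combination -(ν - x) * tilt x
  have hμ := (integrable_mean_sub_mul_gaussianPDFReal μ v).integrableOn (s := Iio b)
  have hν := (integrable_mean_sub_mul_gaussianPDFReal ν v).integrableOn (s := Iio b)
  have hkv : IntegrableOn (fun x ↦ k * v * gaussianPDFReal μ v x) (Iio b) :=
    ((integrable_gaussianPDFReal μ v).const_mul _).integrableOn
  simp_rw [split]
  rw [integral_sub (by exact hμ.add hkv) (hν.const_mul C), integral_add hμ hkv,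
    integral_const_mul, integral_const_mul, setIntegral_Iio_mean_sub_mul_gaussianPDFReal,
    setIntegral_Iio_mean_sub_mul_gaussianPDFReal, boundary_eq]
  ring

variable {v} in
lemma setIntegral_Iio_gaussianPDFReal (hv : v ≠ 0) :
    ∫ x in Iio b, gaussianPDFReal μ v x = erfc ((μ - b) / √(2 * v)) / 2 := by
  have hs : 0 < √(2 * (v : ℝ)) := by positivity
  have reflect : ∫ x in Iio b, gaussianPDFReal μ v x =
      ∫ y in Ioi (μ - b), gaussianPDFReal μ v (μ - y) := by
    rw [← (Measure.measurePreserving_sub_left volume μ).setIntegral_preimage_emb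
      (MeasurableEquiv.subLeft μ).measurableEmbedding, preimage_const_sub_Iio]
  have rescale (y : ℝ) : gaussianPDFReal μ v (μ - y) =
      (√π * √(2 * v))⁻¹ * exp (-((√(2 * v))⁻¹ * y) ^ 2) := by
    rw [gaussianPDFReal, ← sqrt_mul pi_nonneg, mul_pow, inv_pow, sq_sqrt (by positivity)]
    ring_nf
  simp_rw [reflect, rescale]
  rw [integral_const_mul, integral_comp_mul_left_Ioi (fun u ↦ exp (-u ^ 2)) _ (inv_pos.2 hs),
    inv_inv, smul_eq_mul, inv_mul_eq_div, erfc]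
  field_simp

end GaussianDensity

/-- The line `t ↦ h (1 + t)` crossed by `W` when the maximum of `Z` exceeds `h` is replaced by an
arbitrary line `t ↦ a + c t`. -/
theorem stmt_11_general (a c τ : ℝ) (hτ : 0 < τ) :
    (∫ ω in Iio (a + c * τ),
        ((1 / τ) * √(2 / (π * τ)) * (2 * (a + c * τ) - ω) *
            exp (-2 * (a * c) - (ω - 2 * a) ^ 2 / (2 * τ))) *
          (1 - exp (-2 * c * (a + c * τ - ω)))) =
      2 * c * exp (-2 * (a * c)) * erfc ((a - c * τ) / √(2 * τ)) := by
  lift τ to ℝ≥0 using hτ.le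
  have hτ' : τ ≠ 0 := by simpa using hτ.ne'
  have normalization : √(2 / (π * τ)) = 2 * (√(2 * π * τ))⁻¹ := by
    rw [show 2 / (π * (τ : ℝ)) = 2 ^ 2 / (2 * π * τ) by field, sqrt_div (by positivity),
      sqrt_sq zero_le_two, div_eq_mul_inv]
  have integrand_eq (ω : ℝ) :
      ((1 / τ) * √(2 / (π * τ)) * (2 * (a + c * τ) - ω) *
            exp (-2 * (a * c) - (ω - 2 * a) ^ 2 / (2 * τ))) *
          (1 - exp (-2 * c * (a + c * τ - ω))) =
        2 / τ * exp (-2 * (a * c)) * ((2 * a + 2 * c * τ - ω) * gaussianPDFReal (2 * a) τ ω *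
          (1 - exp (-(2 * c) * (a + c * τ - ω)))) := by
    rw [normalization, sub_eq_add_neg (-2 * (a * c)), exp_add, ← neg_div, gaussianPDFReal]
    ring_nf
  simp_rw [integrand_eq]
  rw [integral_const_mul, setIntegral_Iio_gaussianPDFReal_mul_one_sub_exp,
    setIntegral_Iio_gaussianPDFReal _ _ hτ', show 2 * a - (a + c * τ) = a - c * τ by ring]
  field

theorem stmt_11 (h τ : ℝ) (hh : 0 < h) (hτ : 0 < τ) :
    (∫ ω in Iio (h * (1 + τ)),
        ((1 / τ) * Real.sqrt (2 / (π * τ)) * (2 * h * (1 + τ) - ω) *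
            Real.exp (-2 * h ^ 2 - (ω - 2 * h) ^ 2 / (2 * τ))) *
          (1 - Real.exp (-2 * h * (h * (1 + τ) - ω)))) =
      2 * h * Real.exp (-2 * h ^ 2) * erfc (h * (1 - τ) / Real.sqrt (2 * τ)) := by
  simpa only [mul_add, mul_sub, mul_one, sq, mul_assoc] using stmt_11_general h h τ hτ
end

section
/- For every t ∈ (0,1), ∫₀^∞ 2h e^{−2h²} erfc( h(1−2t)/√(2t(1−t)) ) dh = t, where erfc(x) = (2/√π) ∫_x^∞ e^{−u²} du. -/
open Real MeasureTheory Set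

/-!
Integrating by parts against `exp (-a * h ^ 2)` replaces `erfc (c * h)` by its derivative, a
Gaussian. What remains is the Gaussian integral with rate `a + c ^ 2`, whence
`∫ h in Ioi 0, h * exp (-a * h ^ 2) * erfc (c * h) = (1 - c / √(a + c ^ 2)) / (2 * a)`.
For `a = 2` and `c = (1 - 2 * t) / √(2 * t * (1 - t))`, the identity
`2 * (2 * t * (1 - t)) + (1 - 2 * t) ^ 2 = 1` gives `c / √(2 + c ^ 2) = 1 - 2 * t`.
-/

lemma hasDerivAt_integral_Ioi {E : Type*} [NormedAddCommGroup E] [NormedSpace ℝ E]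
    [CompleteSpace E] {f : ℝ → E} {a x : ℝ} (hf : IntegrableOn f (Ioi a)) (hax : a < x)
    (hfx : ContinuousAt f x) :
    HasDerivAt (fun y ↦ ∫ u in Ioi y, f u) (-f x) x := by
  have tail_eq : ∀ y > a, ∫ u in Ioi y, f u = (∫ u in Ioi a, f u) - ∫ u in a..y, f u := by
    intro y hy
    rw [← intervalIntegral.integral_Ioi_sub_Ioi hf hy.le, sub_sub_cancel]
  have hfi : IntervalIntegrable f volume a x :=
    (intervalIntegrable_iff_integrableOn_Ioc_of_le hax.le).2 (hf.mono_set Ioc_subset_Ioi_self)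
  have hfm : StronglyMeasurableAtFilter f (nhds x) :=
    ⟨Ioi a, Ioi_mem_nhds hax, hf.aestronglyMeasurable⟩
  refine ((intervalIntegral.integral_hasDerivAt_right hfi hfm hfx).const_sub
    (∫ u in Ioi a, f u)).congr_of_eventuallyEq ?_
  filter_upwards [Ioi_mem_nhds hax] with y hy using tail_eq y hy

lemma integrable_exp_neg_sq : Integrable fun u : ℝ ↦ exp (-u ^ 2) := by
  simpa only [neg_one_mul] using integrable_exp_neg_mul_sq one_pos

lemma hasDerivAt_erfc (x : ℝ) : HasDerivAt erfc (-(2 / √π * exp (-x ^ 2))) x := by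
  have hcont : Continuous fun u : ℝ ↦ exp (-u ^ 2) := by fun_prop
  rw [← mul_neg]
  exact (hasDerivAt_integral_Ioi integrable_exp_neg_sq.integrableOn (sub_one_lt x)
    hcont.continuousAt).const_mul (2 / √π)

lemma continuous_erfc : Continuous erfc :=
  continuous_iff_continuousAt.2 fun x ↦ (hasDerivAt_erfc x).continuousAt

lemma erfc_zero : erfc 0 = 1 := by
  have gaussian : ∫ u in Ioi (0 : ℝ), exp (-u ^ 2) = √π / 2 := by
    simpa only [neg_one_mul, div_one] using integral_gaussian_Ioi 1
  have : √π ≠ 0 := by positivity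
  rw [erfc, gaussian]
  field_simp

lemma erfc_nonneg (x : ℝ) : 0 ≤ erfc x :=
  mul_nonneg (by positivity) (integral_nonneg fun _ ↦ (exp_pos _).le)

lemma erfc_le_two (x : ℝ) : erfc x ≤ 2 := by
  have gaussian : ∫ u : ℝ, exp (-u ^ 2) = √π := by
    simpa only [neg_one_mul, div_one] using integral_gaussian 1
  have : √π ≠ 0 := by positivity
  calc erfc x ≤ 2 / √π * ∫ u : ℝ, exp (-u ^ 2) := by
        refine mul_le_mul_of_nonneg_left ?_ (by positivity)
        exact setIntegral_le_integral integrable_exp_neg_sq (ae_of_all _ fun _ ↦ (exp_pos _).le)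
    _ = 2 := by rw [gaussian, div_mul_cancel₀ _ this]

lemma integrable_mul_erfc {α : Type*} [MeasurableSpace α] {μ : Measure α} {f g : α → ℝ}
    (hf : Integrable f μ) (hg : AEMeasurable g μ) :
    Integrable (fun x ↦ f x * erfc (g x)) μ :=
  hf.mul_bdd (continuous_erfc.measurable.comp_aemeasurable hg).aestronglyMeasurable
    (ae_of_all _ fun x ↦ (norm_of_nonneg (erfc_nonneg (g x))).trans_le (erfc_le_two (g x)))

lemma hasDerivAt_exp_neg_mul_sq_mul_erfc (a c x : ℝ) :
    HasDerivAt (fun h ↦ exp (-a * h ^ 2) * erfc (c * h))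
      (-(2 * a) * (x * exp (-a * x ^ 2) * erfc (c * x))
        - 2 * c / √π * exp (-(a + c ^ 2) * x ^ 2)) x := by
  have hexp : HasDerivAt (fun h ↦ exp (-a * h ^ 2)) _ x :=
    ((hasDerivAt_pow 2 x).const_mul (-a)).exp
  have herfc : HasDerivAt (fun h ↦ erfc (c * h)) _ x :=
    (hasDerivAt_erfc (c * x)).comp x (hasDerivAt_const_mul c)
  have exp_add_rate : exp (-(a + c ^ 2) * x ^ 2) = exp (-a * x ^ 2) * exp (-(c * x) ^ 2) := by
    rw [← exp_add]
    ring_nf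
  refine (hexp.mul herfc).congr_deriv ?_
  rw [exp_add_rate]
  push_cast
  ring

lemma integral_Ioi_mul_exp_neg_mul_sq_mul_erfc {a : ℝ} (ha : 0 < a) (c : ℝ) :
    ∫ h in Ioi (0 : ℝ), h * exp (-a * h ^ 2) * erfc (c * h)
      = (1 - c / √(a + c ^ 2)) / (2 * a) := by
  have hrate : 0 < a + c ^ 2 := by positivity
  have hmeas : AEMeasurable (fun h : ℝ ↦ c * h) := by fun_prop
  have hprod : Integrable fun h ↦ exp (-a * h ^ 2) * erfc (c * h) :=
    integrable_mul_erfc (integrable_exp_neg_mul_sq ha) hmeas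
  have hleft : Integrable fun h ↦ -(2 * a) * (h * exp (-a * h ^ 2) * erfc (c * h)) :=
    (integrable_mul_erfc (integrable_mul_exp_neg_mul_sq ha) hmeas).const_mul _
  have hright : Integrable fun h : ℝ ↦ 2 * c / √π * exp (-(a + c ^ 2) * h ^ 2) :=
    (integrable_exp_neg_mul_sq hrate).const_mul _
  have hderiv := hasDerivAt_exp_neg_mul_sq_mul_erfc a c
  have hlim := tendsto_zero_of_hasDerivAt_of_integrableOn_Ioi (a := 0) (fun x _ ↦ hderiv x)
    (hleft.sub hright).integrableOn hprod.integrableOn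
  have ftc : ∫ h in Ioi (0 : ℝ), (-(2 * a) * (h * exp (-a * h ^ 2) * erfc (c * h))
      - 2 * c / √π * exp (-(a + c ^ 2) * h ^ 2)) = -1 := by
    simpa [erfc_zero] using integral_Ioi_of_hasDerivAt_of_tendsto' (a := 0) (fun x _ ↦ hderiv x)
      (hleft.sub hright).integrableOn hlim
  have gaussian : 2 * c / √π * ∫ h in Ioi (0 : ℝ), exp (-(a + c ^ 2) * h ^ 2)
      = c / √(a + c ^ 2) := by
    have : √π ≠ 0 := by positivity
    rw [integral_gaussian_Ioi, sqrt_div pi_pos.le]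
    field_simp
  rw [integral_sub hleft.integrableOn hright.integrableOn, integral_const_mul, integral_const_mul,
    gaussian] at ftc
  rw [eq_div_iff (by positivity)]
  linarith

lemma div_sqrt_div_sqrt_add_sq {a p q : ℝ} (hq : 0 < q) (hapq : a * q + p ^ 2 = 1) :
    p / √q / √(a + (p / √q) ^ 2) = p := by
  have sqrt_eq : √(a + (p / √q) ^ 2) = (√q)⁻¹ := by
    rw [← sqrt_inv, div_pow, sq_sqrt hq.le, add_div' _ _ _ hq.ne', hapq, one_div]
  rw [sqrt_eq, div_inv_eq_mul, div_mul_cancel₀ _ (sqrt_pos.2 hq).ne']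

theorem stmt_12 (t : ℝ) (ht : t ∈ Ioo (0:ℝ) 1) :
    (∫ h in Ioi (0:ℝ),
        2 * h * Real.exp (-2 * h ^ 2) *
          erfc (h * (1 - 2 * t) / Real.sqrt (2 * t * (1 - t)))) = t := by
  have hq : 0 < 2 * t * (1 - t) := mul_pos (mul_pos two_pos ht.1) (sub_pos.2 ht.2)
  set q := 2 * t * (1 - t) with hq_def
  calc ∫ h in Ioi (0 : ℝ), 2 * h * exp (-2 * h ^ 2) * erfc (h * (1 - 2 * t) / √q)
      = 2 * ∫ h in Ioi (0 : ℝ), h * exp (-2 * h ^ 2) * erfc ((1 - 2 * t) / √q * h) := by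
        simp only [← integral_const_mul, mul_assoc, mul_div_assoc, mul_comm (_ / √q)]
    _ = 2 * ((1 - (1 - 2 * t) / √q / √(2 + ((1 - 2 * t) / √q) ^ 2)) / (2 * 2)) := by
        rw [integral_Ioi_mul_exp_neg_mul_sq_mul_erfc two_pos]
    _ = 2 * ((1 - (1 - 2 * t)) / (2 * 2)) := by
        rw [div_sqrt_div_sqrt_add_sq hq (by rw [hq_def]; ring)]
    _ = t := by ring
end

section
/- For every h > 0, ∫₀¹ √(2/π) · h² / √(t³(1−t)³) · exp( −h²/(2t(1−t)) ) dt = 4h e^{−2h²}. -/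
open Real MeasureTheory Set

/-!
Put `u = (t - 1/2) / √(t (1 - t))`. This maps `(0, 1)` increasingly onto `ℝ`, its derivative
`1 / (4 √(t (1 - t)) ^ 3)` is the singular factor of the integrand, and
`1 / (t (1 - t)) = 4 (1 + u ^ 2)`. So the substitution turns the integrand into a Gaussian in `u`.
-/

/-- The distance of `t` from the midpoint of `(0, 1)` in units of the standard deviation
`√(t (1 - t))` of a Brownian bridge at time `t`; it is the new variable of integration.
The division makes it `0` outside `(0, 1)`. -/
noncomputable def standardizedTime (t : ℝ) : ℝ :=
  (t - 1 / 2) / √(t * (1 - t))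

theorem sqrt_pow_of_nonneg {x : ℝ} (hx : 0 ≤ x) (n : ℕ) : √(x ^ n) = √x ^ n := by
  rw [sqrt_eq_iff_eq_sq (pow_nonneg hx n) (pow_nonneg (sqrt_nonneg x) n), pow_right_comm,
    sq_sqrt hx]

theorem mul_one_sub_pos {t : ℝ} (ht : t ∈ Ioo (0 : ℝ) 1) : 0 < t * (1 - t) :=
  mul_pos ht.1 (sub_pos.2 ht.2)

theorem standardizedTime_sq {t : ℝ} (ht : t ∈ Ioo (0 : ℝ) 1) :
    standardizedTime t ^ 2 = 1 / (4 * (t * (1 - t))) - 1 := by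
  have t_ne_zero : t ≠ 0 := ht.1.ne'
  have one_sub_ne_zero : 1 - t ≠ 0 := (sub_pos.2 ht.2).ne'
  rw [standardizedTime, div_pow, sq_sqrt (mul_one_sub_pos ht).le]
  field_simp
  ring

theorem hasDerivAt_standardizedTime {t : ℝ} (ht : t ∈ Ioo (0 : ℝ) 1) :
    HasDerivAt standardizedTime (1 / (4 * √(t * (1 - t)) ^ 3)) t := by
  have variance_pos := mul_one_sub_pos ht
  have deviation_pos : 0 < √(t * (1 - t)) := sqrt_pos.2 variance_pos
  have deviation_sq : √(t * (1 - t)) ^ 2 = t * (1 - t) := sq_sqrt variance_pos.le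
  have hasDerivAt_variance :
      HasDerivAt (fun s : ℝ => s * (1 - s)) (1 * (1 - t) + t * -1) t :=
    (hasDerivAt_id' t).mul ((hasDerivAt_id' t).const_sub 1)
  refine (((hasDerivAt_id' t).sub_const (1 / 2)).div
    (hasDerivAt_variance.sqrt variance_pos.ne') deviation_pos.ne').congr_deriv ?_
  field_simp
  rw [deviation_sq]
  ring

theorem strictMonoOn_standardizedTime : StrictMonoOn standardizedTime (Ioo 0 1) := by
  refine strictMonoOn_of_hasDerivWithinAt_pos (convex_Ioo 0 1)
    (f' := fun t => 1 / (4 * √(t * (1 - t)) ^ 3))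
    (fun t ht => (hasDerivAt_standardizedTime ht).continuousAt.continuousWithinAt)
    (fun t ht => (hasDerivAt_standardizedTime (interior_subset ht)).hasDerivWithinAt)
    fun t ht => ?_
  have deviation_pos := sqrt_pos.2 (mul_one_sub_pos (interior_subset ht))
  positivity

theorem image_standardizedTime : standardizedTime '' Ioo 0 1 = univ := by
  refine eq_univ_of_forall fun u => ?_
  have r_sq : √(1 + u ^ 2) ^ 2 = 1 + u ^ 2 := sq_sqrt (by positivity)
  obtain ⟨neg_r_lt, lt_r⟩ : -√(1 + u ^ 2) < u ∧ u < √(1 + u ^ 2) := sq_lt.1 (lt_one_add _)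
  generalize √(1 + u ^ 2) = r at *
  have r_pos : 0 < r := by linarith
  have ratio_lt_one : u / r < 1 := (div_lt_one r_pos).2 lt_r
  have neg_one_lt_ratio : -1 < u / r := by rwa [lt_div_iff₀ r_pos, neg_one_mul]
  refine ⟨(1 + u / r) / 2, ⟨by linarith, by linarith⟩, ?_⟩
  have variance_eq : (1 + u / r) / 2 * (1 - (1 + u / r) / 2) = (1 / (2 * r)) ^ 2 := by
    field_simp
    linear_combination r_sq
  rw [standardizedTime, variance_eq, sqrt_sq (by positivity)]
  field_simp
  ring

theorem integral_deriv_smul_comp_standardizedTime {E : Type*} [NormedAddCommGroup E]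
    [NormedSpace ℝ E] (g : ℝ → E) :
    ∫ t in Ioo (0 : ℝ) 1, (1 / (4 * √(t * (1 - t)) ^ 3)) • g (standardizedTime t) =
      ∫ u, g u := by
  rw [← integral_image_eq_integral_deriv_smul_of_monotoneOn measurableSet_Ioo
    (fun t ht => (hasDerivAt_standardizedTime ht).hasDerivWithinAt)
    strictMonoOn_standardizedTime.monotoneOn, image_standardizedTime, setIntegral_univ]

/-- For `b ≤ 0` the integrand is not integrable and both sides are `0` by convention. -/
theorem integral_exp_neg_div_mul_one_sub (b : ℝ) :
    ∫ t in Ioo (0 : ℝ) 1, exp (-b / (t * (1 - t))) / √(t * (1 - t)) ^ 3 =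
      4 * exp (-4 * b) * √(π / (4 * b)) := by
  rw [← integral_gaussian, ← integral_const_mul, ← integral_deriv_smul_comp_standardizedTime]
  refine setIntegral_congr_fun measurableSet_Ioo fun t ht => ?_
  have exponent_eq : -b / (t * (1 - t)) = -4 * b + -(4 * b) * standardizedTime t ^ 2 := by
    rw [standardizedTime_sq ht]
    field_simp [(mul_one_sub_pos ht).ne']
    ring
  simp only [exponent_eq, exp_add, smul_eq_mul]
  ring

theorem sqrt_two_div_pi_mul_sqrt_pi_div_two_mul_sq {h : ℝ} (hh : 0 < h) :
    √(2 / π) * √(π / (2 * h ^ 2)) = 1 / h := by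
  rw [← sqrt_mul (by positivity), sqrt_eq_iff_eq_sq (by positivity) (by positivity)]
  field_simp

theorem stmt_16 (h : ℝ) (hh : 0 < h) :
    (∫ t in Ioo (0:ℝ) 1,
        Real.sqrt (2 / π) * h ^ 2 / Real.sqrt (t ^ 3 * (1 - t) ^ 3) *
          Real.exp (-h ^ 2 / (2 * t * (1 - t)))) =
      4 * h * Real.exp (-2 * h ^ 2) := by
  calc
    _ = ∫ t in Ioo (0 : ℝ) 1, √(2 / π) * h ^ 2 *
          (exp (-(h ^ 2 / 2) / (t * (1 - t))) / √(t * (1 - t)) ^ 3) := by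
      refine setIntegral_congr_fun measurableSet_Ioo fun t ht => ?_
      have exponent_eq : -h ^ 2 / (2 * t * (1 - t)) = -(h ^ 2 / 2) / (t * (1 - t)) := by
        rw [mul_assoc, ← div_div, neg_div]
      simp only [exponent_eq, ← mul_pow, sqrt_pow_of_nonneg (mul_one_sub_pos ht).le]
      ring
    _ = 4 * h ^ 2 * exp (-2 * h ^ 2) * (√(2 / π) * √(π / (2 * h ^ 2))) := by
      rw [integral_const_mul, integral_exp_neg_div_mul_one_sub,
        show -4 * (h ^ 2 / 2) = -2 * h ^ 2 by ring, show 4 * (h ^ 2 / 2) = 2 * h ^ 2 by ring]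
      ring
    _ = 4 * h * exp (-2 * h ^ 2) := by
      rw [sqrt_two_div_pi_mul_sqrt_pi_div_two_mul_sq hh]
      field_simp
end
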